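/- Let T be a thick positive theory and q a global A-Ls-invariant type. For any Morley sequence (a_i)_{i<δ} in q over A: (i) for all i < δ, a_i ≡^Ls_{A a_{<i}} α, where α ⊨ q; (ii) (a_i)_{i<δ} is A-indiscernible. -/

import Mathlib

/-!
A self-contained formalisation of the basic framework of positive logic
(Ben Yaacov–Poizat style), following Dobrowolski–Kamsma,
"Kim-independence in positive logic".

We work with a fixed language `L` (in universe 0).  Positive existential
formulas, h-inductive sentences, positive theories, homomorphisms,
immersions, existentially closed models, monster models, indiscernible
sequences, thickness, Lascar strong types, global Lascar-invariant types
(presented via realisations in a bigger monster model), Morley sequences,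
Kim-dividing and the related independence relations are all defined below.
-/

open FirstOrder Cardinal

namespace PosLog

/-- Positive existential formulas over the language `L`, with free variables
indexed by `α` and `n` (de Bruijn) quantifiable variables. -/
inductive PEFormula (L : FirstOrder.Language.{0, 0}) (α : Type) : ℕ → Type
  | top {n : ℕ} : PEFormula L α n
  | bot {n : ℕ} : PEFormula L α n
  | equal {n : ℕ} (t₁ t₂ : L.Term (α ⊕ Fin n)) : PEFormula L α n
  | rel {n k : ℕ} (R : L.Relations k) (ts : Fin k → L.Term (α ⊕ Fin n)) : PEFormula L α n
  | and {n : ℕ} (f g : PEFormula L α n) : PEFormula L α n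
  | or {n : ℕ} (f g : PEFormula L α n) : PEFormula L α n
  | ex {n : ℕ} (f : PEFormula L α (n + 1)) : PEFormula L α n

/-- Realisation (satisfaction) of a positive existential formula in an
`L`-structure `M`, under a valuation of the free and bound variables. -/
def PEFormula.Realize {L : FirstOrder.Language.{0, 0}} {M : Type} [L.Structure M] {α : Type} :
    ∀ {n : ℕ}, PEFormula L α n → (α → M) → (Fin n → M) → Prop
  | _, PEFormula.top, _, _ => True
  | _, PEFormula.bot, _, _ => False
  | _, PEFormula.equal t₁ t₂, v, xs => t₁.realize (Sum.elim v xs) = t₂.realize (Sum.elim v xs)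
  | _, PEFormula.rel R ts, v, xs =>
      Language.Structure.RelMap R fun i => (ts i).realize (Sum.elim v xs)
  | _, PEFormula.and f g, v, xs => f.Realize v xs ∧ g.Realize v xs
  | _, PEFormula.or f g, v, xs => f.Realize v xs ∨ g.Realize v xs
  | _, PEFormula.ex f, v, xs => ∃ m, f.Realize v (Fin.snoc xs m)

/-- Satisfaction of a positive existential formula without quantifiable
variables, under a valuation `v` of its free variables. -/
def Sat {L : FirstOrder.Language.{0, 0}} {M : Type} [L.Structure M] {α : Type} (φ : PEFormula L α 0) (v : α → M) : Prop :=
  φ.Realize v fun i => i.elim0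

/-- An h-inductive sentence `∀ x (φ(x) → ψ(x))`, where `φ` and `ψ` are
positive existential. A positive theory is a set of h-inductive sentences. -/
structure HSentence (L : FirstOrder.Language.{0, 0}) where
  n : ℕ
  hyp : PEFormula L Empty n
  concl : PEFormula L Empty n

/-- Satisfaction of an h-inductive sentence in a structure. -/
def HSentence.Holds {L : FirstOrder.Language.{0, 0}} (σ : HSentence L) (M : Type) [L.Structure M] : Prop :=
  ∀ xs : Fin σ.n → M, σ.hyp.Realize Empty.elim xs → σ.concl.Realize Empty.elim xs

/-- `M` is a model of the positive theory `T`. -/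
def ModelsTheory {L : FirstOrder.Language.{0, 0}} (T : Set (HSentence L)) (M : Type) [L.Structure M] : Prop :=
  ∀ σ ∈ T, σ.Holds M

/-- A map between `L`-structures is a homomorphism when it preserves
(positive existential) formulas. -/
def IsHomMap (L : FirstOrder.Language.{0, 0}) {M N : Type} [L.Structure M] [L.Structure N] (h : M → N) : Prop :=
  ∀ {α : Type} (φ : PEFormula L α 0) (v : α → M), Sat φ v → Sat φ (h ∘ v)

/-- A homomorphism is an immersion when it moreover reflects positive
existential formulas. -/
def IsImmersionMap (L : FirstOrder.Language.{0, 0}) {M N : Type} [L.Structure M] [L.Structure N] (h : M → N) : Prop :=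
  IsHomMap L h ∧ ∀ {α : Type} (φ : PEFormula L α 0) (v : α → M), Sat φ (h ∘ v) → Sat φ v

/-- A bundled `L`-structure. -/
structure PreModel (L : FirstOrder.Language.{0, 0}) where
  carrier : Type
  str : L.Structure carrier

attribute [instance] PreModel.str

/-- A bundled structure is a model of `T`. -/
def PreModel.IsModelOf {L : FirstOrder.Language.{0, 0}} (N : PreModel L) (T : Set (HSentence L)) : Prop :=
  ModelsTheory T N.carrier

/-- `M` is an existentially closed (e.c.) model of `T`: it is a model of `T`
and every homomorphism from `M` into a model of `T` is an immersion. -/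
def IsECModelOf {L : FirstOrder.Language.{0, 0}} (T : Set (HSentence L)) (M : Type) [L.Structure M] : Prop :=
  ModelsTheory T M ∧
    ∀ (N : PreModel L) (h : M → N.carrier), N.IsModelOf T → IsHomMap L h → IsImmersionMap L h

/-- The theory `T` has the joint embedding property. -/
def HasJEP {L : FirstOrder.Language.{0, 0}} (T : Set (HSentence L)) : Prop :=
  ∀ M₁ M₂ : PreModel L, M₁.IsModelOf T → M₂.IsModelOf T →
    ∃ (N : PreModel L) (f : M₁.carrier → N.carrier) (g : M₂.carrier → N.carrier),
      N.IsModelOf T ∧ IsHomMap L f ∧ IsHomMap L g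

/-- An automorphism of an `L`-structure: a bijection which is a homomorphism
in both directions. -/
def IsAuto (L : FirstOrder.Language.{0, 0}) {M : Type} [L.Structure M] (f : M ≃ M) : Prop :=
  IsHomMap L (f : M → M) ∧ IsHomMap L (f.symm : M → M)

/-- Two `α`-tuples have the same (positive existential) type over the
parameter set `A`; written `a ≡_A b`. -/
def EqTp (L : FirstOrder.Language.{0, 0}) {M : Type} [L.Structure M] (A : Set M) {α : Type} (a b : α → M) : Prop :=
  ∀ φ : PEFormula L (α ⊕ ↥A) 0,
    Sat φ (Sum.elim a Subtype.val) ↔ Sat φ (Sum.elim b Subtype.val)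

/-- One tuple realizes (all formulas of) the type of another tuple over `A`. -/
def RealizesTpOver (L : FirstOrder.Language.{0, 0}) {M : Type} [L.Structure M] (A : Set M) {α : Type} (a b : α → M) : Prop :=
  ∀ φ : PEFormula L (α ⊕ ↥A) 0,
    Sat φ (Sum.elim a Subtype.val) → Sat φ (Sum.elim b Subtype.val)

/-- A sequence of `α`-tuples, indexed by a linear order, is `A`-indiscernible. -/
def Indisc (L : FirstOrder.Language.{0, 0}) {M : Type} [L.Structure M] (A : Set M) {ι : Type} [LinearOrder ι] {α : Type}
    (c : ι → α → M) : Prop :=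
  ∀ (n : ℕ) (i j : Fin n → ι), StrictMono i → StrictMono j →
    EqTp L A (fun p : Fin n × α => c (i p.1) p.2) (fun p : Fin n × α => c (j p.1) p.2)

/-- Two tuples lie on a common infinite `A`-indiscernible sequence
(i.e. they are at Lascar distance at most one over `A`). -/
def OnIndisc (L : FirstOrder.Language.{0, 0}) {M : Type} [L.Structure M] (A : Set M) {α : Type} (a b : α → M) : Prop :=
  ∃ c : ℕ → α → M, Indisc L A c ∧ ((c 0 = a ∧ c 1 = b) ∨ (c 0 = b ∧ c 1 = a))

/-- Lascar strong type equivalence over `A`: a finite chain in which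
consecutive tuples lie on a common `A`-indiscernible sequence; `a ≡^Ls_A b`. -/
def LsEq (L : FirstOrder.Language.{0, 0}) {M : Type} [L.Structure M] (A : Set M) {α : Type} (a b : α → M) : Prop :=
  Relation.ReflTransGen (OnIndisc L A) a b

/-- `M` is a monster model (universal domain) of `T` for the smallness bound
`κ`: an existentially closed model which is very homogeneous and very
saturated with respect to sets of size `< κ`. -/
structure IsMonster {L : FirstOrder.Language.{0, 0}} (T : Set (HSentence L)) (κ : Cardinal) (M : Type) [L.Structure M] :
    Prop where
  aleph0_lt : ℵ₀ < κ
  ec : IsECModelOf T M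
  homogeneous : ∀ (α : Type) (a b : α → M), #α < κ → EqTp L (∅ : Set M) a b →
    ∃ f : M ≃ M, IsAuto L f ∧ ∀ x, f (a x) = b x
  saturated : ∀ (α β : Type) (v : β → M) (p : Set (PEFormula L (α ⊕ β) 0)),
    #α < κ → #β < κ → #(↥p) < κ →
    (∀ s : Finset (PEFormula L (α ⊕ β) 0), ↑s ⊆ p →
      ∃ a : α → M, ∀ φ ∈ s, Sat φ (Sum.elim a v)) →
    ∃ a : α → M, ∀ φ ∈ p, Sat φ (Sum.elim a v)

/-- Thickness: being an (∅-)indiscernible sequence is type-definable. -/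
def IsThick (L : FirstOrder.Language.{0, 0}) (κ : Cardinal) (M : Type) [L.Structure M] : Prop :=
  ∀ α : Type, #α < κ → ∃ Θ : Set (PEFormula L (ℕ × α) 0),
    ∀ c : ℕ → α → M,
      (Indisc L (∅ : Set M) c ↔ ∀ φ ∈ Θ, Sat φ fun p : ℕ × α => c p.1 p.2)

/-- The theory `T` (with monster model `M`) has SOP₁: there is a formula
`φ(x,y)`, an inconsistency witness `ψ(y₁,y₂)` and a binary tree of parameters
such that paths are consistent while `ψ` witnesses inconsistency of
`φ(x, a_{η⌢1})` with `φ(x, a_ν)` whenever `η⌢0 ⊴ ν`. -/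
def HasSOP1 {L : FirstOrder.Language.{0, 0}} (T : Set (HSentence L)) (M : Type) [L.Structure M] : Prop :=
  ∃ (k m : ℕ) (φ : PEFormula L (Fin k ⊕ Fin m) 0) (ψ : PEFormula L (Fin m ⊕ Fin m) 0)
    (t : List Bool → Fin m → M),
    (∀ σ : ℕ → Bool, ∀ s : Finset ℕ, ∃ x : Fin k → M, ∀ n ∈ s,
      Sat φ (Sum.elim x (t (List.ofFn fun i : Fin n => σ i)))) ∧
    (∀ N : PreModel L, N.IsModelOf T → ∀ y₁ y₂ : Fin m → N.carrier,
      Sat ψ (Sum.elim y₁ y₂) →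
        ¬∃ x : Fin k → N.carrier, Sat φ (Sum.elim x y₁) ∧ Sat φ (Sum.elim x y₂)) ∧
    (∀ η ν : List Bool, (η ++ [false]) <+: ν →
      Sat ψ (Sum.elim (t (η ++ [true])) (t ν)))

/-- `T` is NSOP₁ (relative to its monster model `M`). -/
def NSOP1 {L : FirstOrder.Language.{0, 0}} (T : Set (HSentence L)) (M : Type) [L.Structure M] : Prop :=
  ¬HasSOP1 T M

/-- A subset of the monster model which is (the underlying set of) an
existentially closed submodel of `T`. -/
def IsECSubmodel {L : FirstOrder.Language.{0, 0}} (T : Set (HSentence L)) {M : Type} [L.Structure M] (A : Set M) : Prop :=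
  ∃ S : L.Substructure M, (S : Set M) = A ∧ IsECModelOf T S

/-- Finite satisfiability (= consistency) of the union `⋃ i, Sg(x, vs i)` of
instances of a partial type: every finite part is realized in `M`. -/
def FinSatUnion {L : FirstOrder.Language.{0, 0}} {M : Type} [L.Structure M] {ξ ζ : Type}
    (Sg : Set (PEFormula L (ξ ⊕ ζ) 0)) {ι : Type} (vs : ι → ζ → M) : Prop :=
  ∀ (s : Finset (PEFormula L (ξ ⊕ ζ) 0)) (t : Finset ι), ↑s ⊆ Sg →
    ∃ a : ξ → M, ∀ φ ∈ s, ∀ i ∈ t, Sat φ (Sum.elim a (vs i))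

/-- The partial type `Sg(x, b)` divides over `C`: there is a `C`-indiscernible
sequence starting (up to type over `C`) at `b` along which the union is
inconsistent. -/
def Divides {L : FirstOrder.Language.{0, 0}} {M : Type} [L.Structure M] (C : Set M) {ξ γ : Type}
    (Sg : Set (PEFormula L (ξ ⊕ γ) 0)) (b : γ → M) : Prop :=
  ∃ bs : ℕ → γ → M, Indisc L C bs ∧ EqTp L C (bs 0) b ∧ ¬FinSatUnion Sg bs

/-- The partial type `Sg(x, b)` forks over `C`: it implies a (possibly
infinite) disjunction of formulas, each of which divides over `C`.
Implication is tested in all continuations of the monster `M` that model `T`. -/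
def Forks {L : FirstOrder.Language.{0, 0}} (T : Set (HSentence L)) {M : Type} [L.Structure M] (C : Set M) {ξ γ : Type}
    (Sg : Set (PEFormula L (ξ ⊕ γ) 0)) (b : γ → M) : Prop :=
  ∃ (I : Type) (ρ : I → Type) (ψ : ∀ i, PEFormula L (ξ ⊕ ρ i) 0) (e : ∀ i, ρ i → M),
    (∀ i, Divides C {ψ i} (e i)) ∧
    ∀ (N : PreModel L) (h : M → N.carrier), N.IsModelOf T → IsHomMap L h →
      ∀ x : ξ → N.carrier,
        (∀ φ ∈ Sg, Sat φ (Sum.elim x fun y => h (b y))) →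
        ∃ i, Sat (ψ i) (Sum.elim x fun y => h (e i y))

/-- The (complete) type of `a` over `C ∪ b`, presented with the tuple `b`
split off from the parameter set `C`. -/
def tpOverWith (L : FirstOrder.Language.{0, 0}) {M : Type} [L.Structure M] (C : Set M) {ξ γ : Type} (a : ξ → M)
    (b : γ → M) : Set (PEFormula L (ξ ⊕ (γ ⊕ ↥C)) 0) :=
  {φ | Sat φ (Sum.elim a (Sum.elim b Subtype.val))}

/-- Coheir independence: `a ⫫^u_C b`, i.e. `tp(a/Cb)` is finitely
satisfiable in `C`. -/
def UIndep (L : FirstOrder.Language.{0, 0}) {M : Type} [L.Structure M] (C : Set M) {ξ γ : Type} (a : ξ → M)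
    (b : γ → M) : Prop :=
  ∀ φ : PEFormula L (ξ ⊕ (γ ⊕ ↥C)) 0,
    Sat φ (Sum.elim a (Sum.elim b Subtype.val)) →
    ∃ a' : ξ → M, (∀ x, a' x ∈ C) ∧ Sat φ (Sum.elim a' (Sum.elim b Subtype.val))

section TwoMonsters

/-! Global types are presented through their realisations in a fixed bigger
monster model `BigMon ⊇ Mon` (tuples `β : γ → BigMon` stand for the global
type `tp(β/Mon)`). -/

variable (L : FirstOrder.Language.{0, 0}) {Mon BigMon : Type}
variable [L.Structure Mon] [L.Structure BigMon]

/-- The global type (of `β` over `Mon`) extends the type of the tuple `b`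
over the parameter set `B ⊆ Mon`. -/
def SameTpOver (emb : Mon → BigMon) (B : Set Mon) {γ : Type} (b : γ → Mon)
    (β : γ → BigMon) : Prop :=
  EqTp L (emb '' B) (fun x => emb (b x)) β

/-- The global type of `β` over the monster is `A`-Lascar-invariant: for any
small tuples `b ≡^Ls_A b'` in the monster we have `β b ≡^Ls_A β b'`
(computed in the bigger monster). -/
def LsInvariantOver (κ : Cardinal) (emb : Mon → BigMon) (A : Set Mon) {γ : Type}
    (β : γ → BigMon) : Prop :=
  ∀ (δ : Type) (b b' : δ → Mon), #δ < κ → LsEq L A b b' →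
    LsEq L (emb '' A) (Sum.elim β fun x => emb (b x)) (Sum.elim β fun x => emb (b' x))

/-- `α` realizes the `n`-fold tensor power `q^{⊗n}` of the global
`A`-Ls-invariant type `q = tp(β/Mon)`, characterised by the universal
property of the tensor product of Lascar-invariant types: for every small
`B ⊇ A` and every tuple `(b_j)_{j<n}` in the monster,
`(b_j)_j ≡^Ls_B (α_j)_j` iff `b_j ≡^Ls_{B b_{<j}} β` for every `j < n`. -/
def RealizesTensorPow (κ : Cardinal) (emb : Mon → BigMon) (A : Set Mon) {γ : Type}
    (β : γ → BigMon) (n : ℕ) (α : Fin n → γ → BigMon) : Prop :=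
  ∀ B : Set Mon, A ⊆ B → #(↥B) < κ → ∀ b : Fin n → γ → Mon,
    (LsEq L (emb '' B) (fun p : Fin n × γ => emb (b p.1 p.2))
        (fun p : Fin n × γ => α p.1 p.2) ↔
      ∀ j : Fin n,
        LsEq L ((emb '' B) ∪ ⋃ (k : Fin n) (_ : k < j), Set.range fun x => emb (b k x))
          (fun x => emb (b j x)) β)

/-- `(a_i)_{i ∈ ι}` is a Morley sequence in the global `A`-Ls-invariant type
`q = tp(β/Mon)` over `A`: it has the same Lascar strong type over `A` as some
realisation of the iterated tensor power `q^{⊗ι}`. -/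
def IsMorleyIn (κ : Cardinal) (emb : Mon → BigMon) (A : Set Mon) {γ : Type}
    (β : γ → BigMon) {ι : Type} [LinearOrder ι] (a : ι → γ → Mon) : Prop :=
  ∃ α : ι → γ → BigMon,
    LsEq L (emb '' A) (fun p : ι × γ => emb (a p.1 p.2)) (fun p : ι × γ => α p.1 p.2) ∧
    ∀ (n : ℕ) (g : Fin n → ι), StrictMono g →
      RealizesTensorPow L κ emb A β n fun j => α (g j)

/-- The partial type `Sg(x, b)` (over `M ∪ b`) `q`-divides over `M`, where
`q = tp(β/Mon)` is a global `M`-Ls-invariant type: along any Morley sequence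
in `q` over `M` the union of the corresponding instances is inconsistent. -/
def QDivides (κ : Cardinal) (emb : Mon → BigMon) (M : Set Mon) {ξ γ : Type}
    (β : γ → BigMon) (Sg : Set (PEFormula L (ξ ⊕ (γ ⊕ ↥M)) 0)) : Prop :=
  ∀ bs : ℕ → γ → Mon, IsMorleyIn L κ emb M β bs →
    ¬FinSatUnion Sg fun i => Sum.elim (bs i) (Subtype.val : ↥M → Mon)

/-- Kim-independence `a ⫫^K_M b`: the type `tp(a/Mb)` does not Kim-divide
over `M`, i.e. it does not `q`-divide for any global `M`-Lascar-invariant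
extension `q` of `tp(b/M)`. -/
def KimIndep (κ : Cardinal) (emb : Mon → BigMon) (M : Set Mon) {ξ γ : Type}
    (a : ξ → Mon) (b : γ → Mon) : Prop :=
  ∀ β : γ → BigMon, SameTpOver L emb M b β → LsInvariantOver L κ emb M β →
    ¬QDivides L κ emb M β (tpOverWith L M a b)

/-- `a ⫫^{iLs}_C b` : `tp(a/Cb)` extends to a global `C`-Lascar-invariant
type. -/
def ILsIndep (κ : Cardinal) (emb : Mon → BigMon) (C : Set Mon) {ξ γ : Type}
    (a : ξ → Mon) (b : γ → Mon) : Prop :=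
  ∃ α : ξ → BigMon, SameTpOver L emb (C ∪ Set.range b) a α ∧ LsInvariantOver L κ emb C α

end TwoMonsters

end PosLog

namespace PosLog

/-!
By compactness and homogeneity, an infinite `A`-indiscernible sequence can be prolonged along any
small linear order. Two increasing subfamilies of the same shape therefore have the same Lascar
strong type over `A`: each of them starts an indiscernible sequence of blocks, and the two can be
completed by a common tail. The same holds over the terms lying below both subfamilies.

Let `(aᵢ)` be a Morley sequence in `q`. The universal property of `q^{⊗n}`, taken over `A` itself,
says that two increasing `n`-tuples of terms have the same Lascar strong type over `A`, whence
indiscernibility, and that each term of such a tuple has the Lascar strong type of `q` over the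
preceding terms of the tuple. For a finite sequence this already is (i). For an infinite one,
`A`-Lascar-invariance of `q` shows that `(aᵢ)` followed by a realisation of `q` is still
indiscernible, so any term has the Lascar strong type of that last term over everything below it.

The bigger monster is homogeneous for tuples of length `|Mon|`, which could be shorter than the
tuples of length `< κ` that the argument moves. But if `|Mon| < κ`, saturation turns any partial
homomorphism into `Mon` into a total one, so `Mon` has no proper e.c. extension and tuples of any
length in the bigger monster have few distinct coordinates.
-/

variable {L : FirstOrder.Language.{0, 0}} {M N : Type} [L.Structure M] [L.Structure N]

section Formulas

variable {α β : Type} {n : ℕ}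

/-- A positive existential formula viewed as a first-order formula, which makes the theory of free
variables in `FirstOrder.Language` available for it. -/
def PEFormula.toBoundedFormula : ∀ {n : ℕ}, PEFormula L α n → L.BoundedFormula α n
  | _, .top => ⊤
  | _, .bot => ⊥
  | _, .equal t₁ t₂ => .equal t₁ t₂
  | _, .rel R ts => .rel R ts
  | _, .and φ ψ => φ.toBoundedFormula ⊓ ψ.toBoundedFormula
  | _, .or φ ψ => φ.toBoundedFormula ⊔ ψ.toBoundedFormula
  | _, .ex φ => φ.toBoundedFormula.ex

theorem PEFormula.realize_toBoundedFormula (φ : PEFormula L α n) (v : α → M) (xs : Fin n → M) :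
    φ.toBoundedFormula.Realize v xs ↔ φ.Realize v xs := by
  induction φ with
  | top | bot | equal | rel =>
    simp [toBoundedFormula, PEFormula.Realize, Language.BoundedFormula.Realize]
  | and φ ψ ihφ ihψ | or φ ψ ihφ ihψ => simp [toBoundedFormula, PEFormula.Realize, ihφ, ihψ]
  | ex φ ih => simp [toBoundedFormula, PEFormula.Realize, ih]

theorem exists_finset_sat_congr (φ : PEFormula L α 0) :
    ∃ S : Finset α, ∀ (M : Type) [L.Structure M] (v w : α → M),
      Set.EqOn v w S → (Sat φ v ↔ Sat φ w) := by
  classical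
  refine ⟨φ.toBoundedFormula.freeVarFinset, fun M _ v w hvw ↦ ?_⟩
  have hrestrict : v ∘ (Subtype.val : ↥(φ.toBoundedFormula.freeVarFinset : Set α) → α) =
      w ∘ Subtype.val := funext fun x ↦ hvw x.2
  rw [Sat, Sat, ← φ.realize_toBoundedFormula, ← φ.realize_toBoundedFormula,
    ← Language.BoundedFormula.realize_restrictFreeVar' subset_rfl, hrestrict,
    Language.BoundedFormula.realize_restrictFreeVar']

/-- Relabelling of the free variables of a positive existential formula, some of which become
quantifiable variables; the analogue of `FirstOrder.Language.BoundedFormula.relabel`. -/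
def PEFormula.relabel {k : ℕ} (g : α → β ⊕ Fin k) :
    ∀ {n : ℕ}, PEFormula L α n → PEFormula L β (k + n)
  | _, .top => .top
  | _, .bot => .bot
  | n, .equal t₁ t₂ =>
    .equal (t₁.relabel (Language.BoundedFormula.relabelAux g n))
      (t₂.relabel (Language.BoundedFormula.relabelAux g n))
  | n, .rel R ts => .rel R fun i ↦ (ts i).relabel (Language.BoundedFormula.relabelAux g n)
  | _, .and φ ψ => .and (φ.relabel g) (ψ.relabel g)
  | _, .or φ ψ => .or (φ.relabel g) (ψ.relabel g)
  | _, .ex φ => .ex (φ.relabel g)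

theorem PEFormula.realize_relabel {k : ℕ} (g : α → β ⊕ Fin k) (φ : PEFormula L α n) (v : β → M)
    (xs : Fin (k + n) → M) :
    (φ.relabel g).Realize v xs ↔
      φ.Realize (Sum.elim v (xs ∘ Fin.castAdd n) ∘ g) (xs ∘ Fin.natAdd k) := by
  induction φ with
  | top | bot => rfl
  | equal | rel => simp [relabel, PEFormula.Realize]
  | and φ ψ ihφ ihψ | or φ ψ ihφ ihψ => simp only [relabel, PEFormula.Realize, ihφ, ihψ]
  | @ex n φ ih =>
    simp only [relabel, PEFormula.Realize, ih]
    refine exists_congr fun m ↦ ?_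
    have hfree : (Fin.snoc xs m : Fin (k + n + 1) → M) ∘ Fin.castAdd (n + 1) =
        xs ∘ Fin.castAdd n :=
      funext fun i ↦ Fin.snoc_castSucc (α := fun _ ↦ M) m xs (Fin.castAdd n i)
    have hbound : (Fin.snoc xs m : Fin (k + n + 1) → M) ∘ Fin.natAdd k =
        Fin.snoc (xs ∘ Fin.natAdd k) m := by
      ext i
      cases i using Fin.lastCases with
      | last => simp
      | cast i => simp [← Fin.castSucc_natAdd]
    rw [hfree, hbound]

/-- The formula `φ` with its free variables renamed along `f`. -/
def PEFormula.rename (f : α → β) (φ : PEFormula L α 0) : PEFormula L β 0 :=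
  φ.relabel (k := 0) (Sum.inl ∘ f)

theorem sat_rename (f : α → β) (φ : PEFormula L α 0) (v : β → M) :
    Sat (φ.rename f) v ↔ Sat φ (v ∘ f) := by
  rw [Sat, PEFormula.rename, PEFormula.realize_relabel, ← Function.comp_assoc, Sum.elim_comp_inl,
    Sat]
  exact iff_of_eq (congrArg _ (Subsingleton.elim _ _))

/-- The formula `∃ x, φ(x, y)`, where `x` is the free variable `Sum.inl ()` of `φ`. -/
def PEFormula.exFree (φ : PEFormula L (Unit ⊕ α) 0) : PEFormula L α 0 :=
  .ex (φ.relabel (k := 1) (Sum.elim (fun _ ↦ .inr 0) .inl))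

theorem sat_exFree (φ : PEFormula L (Unit ⊕ α) 0) (v : α → M) :
    Sat φ.exFree v ↔ ∃ m, Sat φ (Sum.elim (fun _ ↦ m) v) := by
  refine exists_congr fun m ↦ ?_
  rw [PEFormula.realize_relabel, Sum.comp_elim, Sat]
  exact iff_of_eq (congrArg _ (Subsingleton.elim _ _))

theorem sat_equal_var (x y : α) (v : α → M) :
    Sat (.equal (.var (.inl x)) (.var (.inl y)) : PEFormula L α 0) v ↔ v x = v y :=
  Iff.rfl

theorem exists_sat_iff_forall_mem (s : Finset (PEFormula L α 0)) :
    ∃ ψ : PEFormula L α 0, ∀ (M : Type) [L.Structure M] (v : α → M),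
      Sat ψ v ↔ ∀ φ ∈ s, Sat φ v := by
  classical
  induction s using Finset.induction_on with
  | empty => exact ⟨.top, fun M _ v ↦ by simp [Sat, PEFormula.Realize]⟩
  | insert φ s _ ih =>
    obtain ⟨ψ, hψ⟩ := ih
    refine ⟨.and φ ψ, fun M _ v ↦ ?_⟩
    rw [Finset.forall_mem_insert, ← hψ]
    rfl

theorem exists_finset_sat_iff (φ : PEFormula L α 0) :
    ∃ (S : Finset α) (ψ : PEFormula L S 0), ∀ (M : Type) [L.Structure M] (v : α → M),
      Sat φ v ↔ Sat ψ fun x : S ↦ v x := by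
  classical
  rcases isEmpty_or_nonempty α with hα | ⟨⟨x₀⟩⟩
  · refine ⟨∅, φ.rename isEmptyElim, fun M _ v ↦ ?_⟩
    rw [sat_rename]
    exact iff_of_eq (congrArg _ (Subsingleton.elim _ _))
  · obtain ⟨S, hS⟩ := exists_finset_sat_congr φ
    let f : α → (insert x₀ S : Finset α) := fun x ↦
      if hx : x ∈ S then ⟨x, Finset.mem_insert_of_mem hx⟩ else ⟨x₀, Finset.mem_insert_self _ _⟩
    refine ⟨insert x₀ S, φ.rename f, fun M _ v ↦ ?_⟩
    rw [sat_rename]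
    refine hS M _ _ fun x hx ↦ ?_
    simp [f, Finset.mem_coe.1 hx]

end Formulas

section Types

variable {A A' : Set M} {X Y Z : Type} {u v w : X → M}

theorem EqTp.refl (A : Set M) (u : X → M) : EqTp L A u u := fun _ ↦ Iff.rfl

theorem EqTp.symm (h : EqTp L A u v) : EqTp L A v u := fun φ ↦ (h φ).symm

theorem EqTp.trans (huv : EqTp L A u v) (hvw : EqTp L A v w) : EqTp L A u w :=
  fun φ ↦ (huv φ).trans (hvw φ)

theorem EqTp.of_comp {s t : Y → M} (h : EqTp L A u v) (r : Y ⊕ A' → X ⊕ A)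
    (hs : Sum.elim s Subtype.val = Sum.elim u Subtype.val ∘ r)
    (ht : Sum.elim t Subtype.val = Sum.elim v Subtype.val ∘ r) : EqTp L A' s t := by
  intro φ
  rw [hs, ht, ← sat_rename, ← sat_rename]
  exact h _

theorem EqTp.mono (hA : A' ⊆ A) (h : EqTp L A u v) : EqTp L A' u v :=
  h.of_comp (Sum.map id (Set.inclusion hA)) (by rw [Sum.elim_comp_map]; rfl)
    (by rw [Sum.elim_comp_map]; rfl)

theorem EqTp.comp (h : EqTp L A u v) (r : Y → X) : EqTp L A (u ∘ r) (v ∘ r) :=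
  h.of_comp (Sum.map r id) (by rw [Sum.elim_comp_map]; rfl) (by rw [Sum.elim_comp_map]; rfl)

theorem EqTp.eq_iff (h : EqTp L A u v) (x y : X) : u x = u y ↔ v x = v y := by
  simpa only [sat_equal_var, Sum.elim_inl] using
    h (.equal (.var (.inl (.inl x))) (.var (.inl (.inl y))))

theorem eqTp_union_range_iff (w : Z → M) :
    EqTp L (A ∪ Set.range w) u v ↔ EqTp L A (Sum.elim u w) (Sum.elim v w) := by
  constructor <;> intro h
  · refine h.of_comp (Sum.elim (Sum.map id fun z ↦ ⟨w z, .inr ⟨z, rfl⟩⟩)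
      (Sum.inr ∘ Set.inclusion Set.subset_union_left)) ?_ ?_ <;>
    · ext ((x | z) | a) <;> rfl
  · have hcover : ∀ z : ↥(A ∪ Set.range w), ∃ y : Z ⊕ A, Sum.elim w Subtype.val y = z := by
      rintro ⟨z, hz | ⟨y, rfl⟩⟩
      exacts [⟨.inr ⟨z, hz⟩, rfl⟩, ⟨.inl y, rfl⟩]
    choose p hp using hcover
    refine h.of_comp (Sum.elim (.inl ∘ .inl) fun z ↦ Sum.map .inr id (p z)) ?_ ?_ <;>
    · ext (x | z)
      · rfl
      · simp only [Sum.elim_inr, Function.comp_apply, ← hp z]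
        cases p z <;> rfl

theorem eqTp_of_forall_finset
    (h : ∀ S : Finset X, EqTp L A (fun x : S ↦ u x) (fun x : S ↦ v x)) : EqTp L A u v := by
  intro φ
  obtain ⟨F, ψ, hψ⟩ := exists_finset_sat_iff φ
  let r : F → F.toLeft ⊕ A
    | ⟨.inl x, hx⟩ => .inl ⟨x, Finset.mem_toLeft.2 hx⟩
    | ⟨.inr a, _⟩ => .inr a
  have hr (w : X → M) : (fun x : F ↦ Sum.elim w (Subtype.val : A → M) x) =
      Sum.elim (fun x : F.toLeft ↦ w x) Subtype.val ∘ r := by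
    ext ⟨x | a, hx⟩ <;> rfl
  rw [hψ M, hψ M, hr u, hr v, ← sat_rename, ← sat_rename]
  exact h _ _

theorem IsAuto.eqTp {f : M ≃ M} (hf : IsAuto L f) (hA : ∀ z ∈ A, f z = z) (u : X → M) :
    EqTp L A u (f ∘ u) := by
  intro φ
  have hfu : Sum.elim (f ∘ u) (Subtype.val : A → M) = f ∘ Sum.elim u Subtype.val := by
    rw [Sum.comp_elim, show f ∘ (Subtype.val : A → M) = Subtype.val from funext fun z ↦ hA z z.2]
  have hsymm : Sum.elim u (Subtype.val : A → M) = f.symm ∘ f ∘ Sum.elim u Subtype.val := by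
    simp [← Function.comp_assoc]
  rw [hfu]
  exact ⟨hf.1 φ _, fun h ↦ hsymm ▸ hf.2 φ _ h⟩

theorem IsImmersionMap.eqTp_of_image {e : M → N} (he : IsImmersionMap L e)
    (h : EqTp L (e '' A) (e ∘ u) (e ∘ v)) : EqTp L A u v := by
  intro φ
  have hsat (w : X → M) : Sat φ (Sum.elim w Subtype.val) ↔
      Sat (φ.rename (Sum.map id (A.imageFactorization e))) (Sum.elim (e ∘ w) Subtype.val) := by
    rw [sat_rename, Sum.elim_comp_map, Set.imageFactorization_eq, Function.comp_id,
      ← Sum.comp_elim]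
    exact ⟨he.1 φ _, he.2 φ _⟩
  rw [hsat, hsat]
  exact h _

end Types

section EhrenfeuchtMostowski

variable {A A' : Set M} {γ O O' O'' W : Type} [LinearOrder O] [LinearOrder O'] [LinearOrder O'']
  [LinearOrder W] {c : O → γ → M} {c' : O' → γ → M} {c'' : O'' → γ → M}

/-- Equality of Ehrenfeucht–Mostowski types over `A`: increasing finite subsequences of `c` and `c'`
of the same length have the same type over `A`. With `c = c'` this is `A`-indiscernibility. -/
def EMEq (L : FirstOrder.Language.{0, 0}) {M : Type} [L.Structure M] (A : Set M) {γ O O' : Type}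
    [LinearOrder O] [LinearOrder O'] (c : O → γ → M) (c' : O' → γ → M) : Prop :=
  ∀ (n : ℕ) (i : Fin n → O) (j : Fin n → O'), StrictMono i → StrictMono j →
    EqTp L A (Function.uncurry (c ∘ i)) (Function.uncurry (c' ∘ j))

theorem indisc_iff_emEq : Indisc L A c ↔ EMEq L A c c := Iff.rfl

theorem EMEq.symm (h : EMEq L A c c') : EMEq L A c' c := fun n i j hi hj ↦ (h n j i hj hi).symm

theorem EMEq.mono (hA : A' ⊆ A) (h : EMEq L A c c') : EMEq L A' c c' :=
  fun n i j hi hj ↦ (h n i j hi hj).mono hA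

theorem EMEq.comp_right {e : W → O'} (h : EMEq L A c c') (he : StrictMono e) :
    EMEq L A c (c' ∘ e) :=
  fun n i j hi hj ↦ h n i (e ∘ j) hi (he.comp hj)

theorem exists_strictMono_fin (O : Type) [LinearOrder O] [Infinite O] (n : ℕ) :
    ∃ i : Fin n → O, StrictMono i := by
  obtain ⟨i⟩ := nonempty_orderEmbedding_of_finite_infinite (Fin n) O
  exact ⟨i, i.strictMono⟩

theorem EMEq.trans [Infinite O'] (h : EMEq L A c c') (h' : EMEq L A c' c'') : EMEq L A c c'' := by
  intro n i k hi hk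
  obtain ⟨j, hj⟩ := exists_strictMono_fin O' n
  exact (h n i j hi hj).trans (h' n j k hj hk)

theorem EMEq.eqTp (h : EMEq L A c c') {f : W → O} {f' : W → O'} (hf : StrictMono f)
    (hf' : StrictMono f') :
    EqTp L A (Function.uncurry (c ∘ f)) (Function.uncurry (c' ∘ f')) := by
  classical
  refine eqTp_of_forall_finset fun S ↦ ?_
  let F : Finset W := S.image Prod.fst
  let e : Fin F.card ≃o F := F.orderIsoOfFin rfl
  have he : StrictMono fun k ↦ (e k : W) := e.strictMono
  let r : S → Fin F.card × γ := fun p ↦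
    (e.symm ⟨p.1.1, Finset.mem_image_of_mem Prod.fst p.2⟩, p.1.2)
  have hr (d : W → γ → M) : (fun p : S ↦ Function.uncurry d p) =
      Function.uncurry (d ∘ fun k ↦ (e k : W)) ∘ r := by
    ext p
    simp [r, Function.uncurry]
  rw [hr, hr]
  exact (h _ _ _ (hf.comp he) (hf'.comp he)).comp r

theorem EMEq.restrict_preimage_of_forall_Iic {I : Type} [LinearOrder I] {r : W → I} {J : Set I}
    {s : W → γ → M} (h : ∀ x ∈ J, EMEq L A c fun w : r ⁻¹' Set.Iic x ↦ s w) :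
    EMEq L A c fun w : r ⁻¹' J ↦ s w := by
  rintro (_ | n) i j hi hj
  · rw [Subsingleton.elim (Function.uncurry _)]
    exact .refl _ _
  · obtain ⟨m, hm⟩ := Finite.exists_max fun k ↦ r (j k)
    exact h (r (j m)) (j m).2 _ i (fun k ↦ ⟨j k, hm k⟩) hi hj

theorem EMEq.auto {f : M ≃ M} (hf : IsAuto L f) (hA : ∀ z ∈ A, f z = z) (h : EMEq L A c c') :
    EMEq L A c fun k ↦ f ∘ c' k :=
  fun n i j hi hj ↦ (h n i j hi hj).trans (hf.eqTp hA _)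

end EhrenfeuchtMostowski

section Lascar

variable {A A' : Set M} {X Y γ O O' : Type} [LinearOrder O] [LinearOrder O'] {u v w : X → M}
  {c : O → γ → M} {c' : O' → γ → M}

theorem EMEq.indisc_left [Infinite O'] (h : EMEq L A c c') : Indisc L A c := h.trans h.symm

theorem EMEq.indisc_right [Infinite O] (h : EMEq L A c c') : Indisc L A c' := h.symm.trans h

theorem Indisc.mono (hA : A' ⊆ A) (h : Indisc L A c) : Indisc L A' c :=
  (indisc_iff_emEq.1 h).mono hA

theorem Indisc.auto {f : M ≃ M} (hf : IsAuto L f) (hA : ∀ z ∈ A, f z = z) (h : Indisc L A c) :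
    Indisc L A fun k ↦ f ∘ c k :=
  ((indisc_iff_emEq.1 h).auto hf hA).symm.auto hf hA

instance : Std.Symm (OnIndisc L A : (X → M) → (X → M) → Prop) :=
  ⟨fun _ _ h ↦ h.imp fun _ ↦ And.imp_right Or.symm⟩

theorem OnIndisc.map (h : OnIndisc L A u v) (F : (X → M) → Y → M)
    (hF : ∀ c : ℕ → X → M, Indisc L A c → Indisc L A' (F ∘ c)) : OnIndisc L A' (F u) (F v) := by
  obtain ⟨c, hc, h⟩ := h
  refine ⟨F ∘ c, hF c hc, ?_⟩
  rcases h with ⟨rfl, rfl⟩ | ⟨rfl, rfl⟩ <;> simp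

theorem LsEq.map (h : LsEq L A u v) (F : (X → M) → Y → M)
    (hF : ∀ c : ℕ → X → M, Indisc L A c → Indisc L A' (F ∘ c)) : LsEq L A' (F u) (F v) :=
  Relation.ReflTransGen.lift F (fun _ _ h ↦ h.map F hF) _ _ h

theorem LsEq.symm (h : LsEq L A u v) : LsEq L A v u :=
  Relation.ReflTransGen.stdSymm.symm _ _ h

theorem LsEq.trans (huv : LsEq L A u v) (hvw : LsEq L A v w) : LsEq L A u w :=
  Relation.ReflTransGen.trans huv hvw

theorem LsEq.mono (hA : A' ⊆ A) (h : LsEq L A u v) : LsEq L A' u v :=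
  h.map id fun _ ↦ Indisc.mono hA

theorem LsEq.comp (h : LsEq L A u v) (r : Y → X) : LsEq L A (u ∘ r) (v ∘ r) :=
  h.map (· ∘ r) fun _ hc n i j hi hj ↦ (hc n i j hi hj).comp (Prod.map id r)

theorem LsEq.auto {f : M ≃ M} (hf : IsAuto L f) (hA : ∀ z ∈ A, f z = z) (h : LsEq L A u v) :
    LsEq L A (f ∘ u) (f ∘ v) :=
  h.map (f ∘ ·) fun _ ↦ Indisc.auto hf hA

theorem Indisc.eqTp (h : Indisc L A c) (k l : O) : EqTp L A (c k) (c l) :=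
  (h 1 (fun _ ↦ k) (fun _ ↦ l) (Subsingleton.strictMono _) (Subsingleton.strictMono _)).comp
    (Prod.mk 0)

theorem Indisc.lsEq_nat {c : ℕ → γ → M} (h : Indisc L A c) : LsEq L A (c 0) (c 1) :=
  .single ⟨c, h, .inl ⟨rfl, rfl⟩⟩

theorem LsEq.eqTp (h : LsEq L A u v) : EqTp L A u v := by
  induction h with
  | refl => exact .refl A u
  | tail _ h ih =>
    obtain ⟨c, hc, ⟨rfl, rfl⟩ | ⟨rfl, rfl⟩⟩ := h
    exacts [ih.trans (hc.eqTp 0 1), ih.trans (hc.eqTp 1 0)]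

end Lascar

section SmallMonsters

variable {T : Set (HSentence L)} {κ : Cardinal}

/-- A relation between two structures is a partial homomorphism for positive existential formulas:
whatever holds of left coordinates holds of the corresponding right coordinates. -/
def IsHomRel (L : FirstOrder.Language.{0, 0}) {N M : Type} [L.Structure N] [L.Structure M]
    (G : Set (N × M)) : Prop :=
  ∀ φ : PEFormula L G 0, Sat φ (fun p : G ↦ p.1.1) → Sat φ (fun p : G ↦ p.1.2)

theorem IsHomRel.sat_comp {G : Set (N × M)} (hG : IsHomRel L G) {X : Type} {f : X → N} {g : X → M}
    (hfg : ∀ x, (f x, g x) ∈ G) (φ : PEFormula L X 0) (hφ : Sat φ f) : Sat φ g := by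
  have := hG (φ.rename fun x ↦ ⟨(f x, g x), hfg x⟩)
  rw [sat_rename, sat_rename] at this
  exact this hφ

theorem IsHomRel.sUnion {𝒢 : Set (Set (N × M))} (h𝒢 : ∀ G ∈ 𝒢, IsHomRel L G)
    (hchain : IsChain (· ⊆ ·) 𝒢) (hne : 𝒢.Nonempty) : IsHomRel L (⋃₀ 𝒢) := by
  intro φ hφ
  obtain ⟨F, ψ, hψ⟩ := exists_finset_sat_iff φ
  obtain ⟨G, hG, hFG⟩ := hchain.directedOn.exists_mem_subset_of_finite_of_subset_sUnion hne
    (F.finite_toSet.image Subtype.val) (by rintro _ ⟨p, -, rfl⟩; exact p.2)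
  rw [hψ] at hφ ⊢
  exact (h𝒢 G hG).sat_comp (fun p ↦ hFG ⟨p.1, p.2, rfl⟩) ψ hφ

theorem isHomRel_insert {G : Set (N × M)} {c : N} {m : M}
    (h : ∀ φ : PEFormula L (Unit ⊕ G) 0, Sat φ (Sum.elim (fun _ ↦ c) fun p ↦ p.1.1) →
      Sat φ (Sum.elim (fun _ ↦ m) fun p ↦ p.1.2)) : IsHomRel L (insert (c, m) G) := by
  have hcover : ∀ p : ↥(insert (c, m) G), ∃ r : Unit ⊕ G,
      p.1 = Sum.elim (fun _ ↦ (c, m)) Subtype.val r := by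
    rintro ⟨p, rfl | hp⟩
    exacts [⟨.inl (), rfl⟩, ⟨.inr ⟨p, hp⟩, rfl⟩]
  choose r hr using hcover
  intro φ
  have hfst : (fun p : ↥(insert (c, m) G) ↦ p.1.1) =
      Sum.elim (fun _ ↦ c) (fun p : G ↦ p.1.1) ∘ r := by
    ext p; rw [hr]; simp only [Function.comp_apply]; cases r p <;> rfl
  have hsnd : (fun p : ↥(insert (c, m) G) ↦ p.1.2) =
      Sum.elim (fun _ ↦ m) (fun p : G ↦ p.1.2) ∘ r := by
    ext p; rw [hr]; simp only [Function.comp_apply]; cases r p <;> rfl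
  rw [hfst, hsnd, ← sat_rename, ← sat_rename]
  exact h _

theorem IsHomRel.exists_forall_sat (hM : IsMonster T κ M) (hκ : #M < κ) {G : Set (N × M)}
    (hG : IsHomRel L G) {I : Type} (hI : #I < κ) {c : N} (φ : I → PEFormula L (Unit ⊕ G) 0)
    (hφ : ∀ i, Sat (φ i) (Sum.elim (fun _ ↦ c) fun p ↦ p.1.1)) :
    ∃ m : M, ∀ i, Sat (φ i) (Sum.elim (fun _ ↦ m) fun p ↦ p.1.2) := by
  classical
  let r : Unit ⊕ G → Unit ⊕ M := Sum.map id fun p ↦ p.1.2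
  have hr (m : M) (i : I) : Sat ((φ i).rename r) (Sum.elim (fun _ ↦ m) id) ↔
      Sat (φ i) (Sum.elim (fun _ ↦ m) fun p ↦ p.1.2) := by
    rw [sat_rename, Sum.elim_comp_map]; rfl
  obtain ⟨a, ha⟩ := hM.saturated Unit M id (Set.range fun i ↦ (φ i).rename r)
    (mk_unit.trans_lt (one_lt_aleph0.trans hM.aleph0_lt)) hκ (mk_range_le.trans_lt hI) fun s hs ↦ by
      rw [← Set.image_univ, Finset.subset_set_image_iff] at hs
      obtain ⟨t, -, rfl⟩ := hs
      obtain ⟨ψ, hψ⟩ := exists_sat_iff_forall_mem (t.image φ)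
      have hc : Sat ψ.exFree fun p : G ↦ p.1.1 :=
        (sat_exFree _ _).2 ⟨c, (hψ _ _).2 (Finset.forall_mem_image.2 fun i _ ↦ hφ i)⟩
      obtain ⟨m, hm⟩ := (sat_exFree _ _).1 (hG _ hc)
      exact ⟨fun _ ↦ m, Finset.forall_mem_image.2 fun i hi ↦
        (hr m i).2 ((hψ _ _).1 hm _ (Finset.mem_image_of_mem φ hi))⟩
  exact ⟨a (), fun i ↦ (hr _ i).1 (ha _ ⟨i, rfl⟩)⟩

theorem IsHomRel.exists_insert (hM : IsMonster T κ M) (hκ : #M < κ) {G : Set (N × M)}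
    (hG : IsHomRel L G) (c : N) : ∃ m, IsHomRel L (insert (c, m) G) := by
  by_contra! hcon
  have hrefute : ∀ m : M, ∃ φ : PEFormula L (Unit ⊕ G) 0,
      Sat φ (Sum.elim (fun _ ↦ c) fun p ↦ p.1.1) ∧
        ¬ Sat φ (Sum.elim (fun _ ↦ m) fun p ↦ p.1.2) := by
    intro m
    by_contra! h
    exact hcon m (isHomRel_insert h)
  choose φ hc hm using hrefute
  obtain ⟨m, hsat⟩ := hG.exists_forall_sat hM hκ hκ φ hc
  exact hm m (hsat m)

theorem IsHomRel.exists_isHomMap_extending (hM : IsMonster T κ M) (hκ : #M < κ) {G : Set (N × M)}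
    (hG : IsHomRel L G) : ∃ ρ : N → M, IsHomMap L ρ ∧ ∀ p ∈ G, ρ p.1 = p.2 := by
  obtain ⟨G', hGG', hG'⟩ := zorn_subset_nonempty {G : Set (N × M) | IsHomRel L G}
    (fun 𝒢 h𝒢 hchain hne ↦ ⟨⋃₀ 𝒢, .sUnion h𝒢 hchain hne, fun _ ↦ Set.subset_sUnion_of_mem⟩) G hG
  have htotal : ∀ c : N, ∃ m, (c, m) ∈ G' := by
    intro c
    obtain ⟨m, hm⟩ := hG'.prop.exists_insert hM hκ c
    exact ⟨m, hG'.le_of_ge hm (Set.subset_insert _ _) (Set.mem_insert _ _)⟩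
  choose ρ hρ using htotal
  refine ⟨ρ, fun φ v ↦ hG'.prop.sat_comp (fun x ↦ hρ (v x)) φ, fun p hp ↦ ?_⟩
  exact hG'.prop.sat_comp (f := fun _ : Bool ↦ p.1) (g := fun b ↦ bif b then ρ p.1 else p.2)
    (Bool.rec (hGG' hp) (hρ p.1)) (.equal (.var (.inl true)) (.var (.inl false))) rfl

theorem IsImmersionMap.injective {e : M → N} (he : IsImmersionMap L e) : Function.Injective e :=
  fun x y hxy ↦ he.2 (.equal (.var (.inl true)) (.var (.inl false)))
    (fun b ↦ bif b then x else y) hxy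

theorem IsMonster.surjective_of_isImmersionMap (hM : IsMonster T κ M) (hκ : #M < κ)
    (hN : IsECModelOf T N) {e : M → N} (he : IsImmersionMap L e) : Function.Surjective e := by
  have hgraph : IsHomRel L (Set.range fun m ↦ (e m, m)) := by
    intro φ hφ
    refine he.2 φ _ ?_
    rwa [show e ∘ (fun p : ↥(Set.range fun m ↦ (e m, m)) ↦ p.1.2) = fun p ↦ p.1.1 by
      ext ⟨_, m, rfl⟩; rfl]
  obtain ⟨ρ, hρ, hretract⟩ := hgraph.exists_isHomMap_extending hM hκ
  have hρinj : Function.Injective ρ := (hN.2 ⟨M, inferInstance⟩ ρ hM.ec.1 hρ).injective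
  exact fun n ↦ ⟨ρ n, hρinj (hretract _ ⟨ρ n, rfl⟩)⟩

end SmallMonsters

section Homogeneity

variable {T : Set (HSentence L)} {κ : Cardinal} {A : Set M}

/-- The structure is homogeneous over `A` for tuples of length `< κ`: equality of types over `A` is
witnessed by automorphisms fixing `A` pointwise. -/
def HomogeneousOver (L : FirstOrder.Language.{0, 0}) {M : Type} [L.Structure M] (A : Set M)
    (κ : Cardinal) : Prop :=
  ∀ (X : Type) (u v : X → M), #X < κ → EqTp L A u v →
    ∃ f : M ≃ M, IsAuto L f ∧ (∀ z ∈ A, f z = z) ∧ f ∘ u = v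

theorem EqTp.elim_subtype_val {X : Type} {u v : X → M} (h : EqTp L A u v) :
    EqTp L ∅ (Sum.elim u (Subtype.val : A → M)) (Sum.elim v Subtype.val) := by
  rwa [← eqTp_union_range_iff, Subtype.range_coe, Set.empty_union]

theorem IsMonster.homogeneousOver (hM : IsMonster T κ M) (hA : #A < κ) :
    HomogeneousOver L A κ := by
  intro X u v hX h
  obtain ⟨f, hf, hfuv⟩ := hM.homogeneous (X ⊕ A) _ _
    (by simpa using add_lt_of_lt hM.aleph0_lt.le hX hA) h.elim_subtype_val
  exact ⟨f, hf, fun z hz ↦ hfuv (.inr ⟨z, hz⟩), funext fun x ↦ hfuv (.inl x)⟩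

/-- Tuples in a small monster have few distinct coordinates, so homogeneity does not depend on
their length. -/
theorem IsMonster.homogeneousOver_of_mk_lt (hM : IsMonster T κ M) (hκ : #M < κ) (A : Set M)
    (μ : Cardinal) : HomogeneousOver L A μ := by
  intro X u v _ h
  let r := Set.rangeSplitting u
  have hr (x : X) : u (r ⟨u x, x, rfl⟩) = u x := Set.apply_rangeSplitting u _
  obtain ⟨f, hf, hfA, hfr⟩ := hM.homogeneousOver ((mk_set_le A).trans_lt hκ) (Set.range u) _ _
    ((mk_set_le _).trans_lt hκ) (h.comp r)
  refine ⟨f, hf, hfA, funext fun x ↦ ?_⟩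
  calc f (u x) = f (u (r ⟨u x, x, rfl⟩)) := by rw [hr]
    _ = v (r ⟨u x, x, rfl⟩) := congrFun hfr _
    _ = v x := (h.eq_iff _ _).1 (hr x)

theorem IsMonster.homogeneousOver_image {κ' : Cardinal} (hM : IsMonster T κ M)
    (hN : IsMonster T κ' N) (hsize : #M < κ') {e : M → N} (he : IsImmersionMap L e) (B : Set M) :
    HomogeneousOver L (e '' B) κ := by
  rcases lt_or_ge (#M) κ with hκ | hκ
  · have hcard := mk_le_of_surjective (hM.surjective_of_isImmersionMap hκ hN.ec he)
    exact hN.homogeneousOver_of_mk_lt (hcard.trans_lt hsize) _ _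
  · intro X u v hX
    exact hN.homogeneousOver ((mk_image_le.trans (mk_set_le B)).trans_lt hsize) X u v
      (hX.trans (hκ.trans_lt hsize))

end Homogeneity

section Stretching

theorem exists_forall_of_forall_lt {I β : Type} [LinearOrder I] [WellFoundedLT I] [Nonempty β]
    {Q : I → (I → β) → Prop} (hQ : ∀ x s t, Set.EqOn s t (Set.Iic x) → Q x s → Q x t)
    (step : ∀ x s, (∀ y < x, Q y s) → ∃ b, Q x (Function.update s x b)) : ∃ s, ∀ x, Q x s := by
  classical
  let extend (x : I) (t : ∀ y < x, β) (y : I) : β :=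
    if h : y < x then t y h else Classical.arbitrary β
  let s : I → β := wellFounded_lt.fix fun x t ↦
    Classical.epsilon fun b ↦ Q x (Function.update (extend x t) x b)
  have hs (x : I) : s x =
      Classical.epsilon fun b ↦ Q x (Function.update (extend x fun y _ ↦ s y) x b) :=
    wellFounded_lt.fix_eq _ x
  have hextend (x : I) : Set.EqOn s (extend x fun y _ ↦ s y) (Set.Iio x) :=
    fun y hy ↦ by rw [Set.mem_Iio] at hy; simp [extend, hy]
  refine ⟨s, fun x ↦ ?_⟩
  induction x using WellFoundedLT.induction with | ind x ih => _
  have hx := Classical.epsilon_spec (step x (extend x fun y _ ↦ s y) fun y hy ↦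
    hQ y _ _ ((hextend x).mono (Set.Iic_subset_Iio.2 hy)) (ih y hy))
  rw [← hs] at hx
  refine hQ x _ _ (fun y hy ↦ ?_) hx
  rcases (Set.mem_Iic.1 hy).eq_or_lt with rfl | hlt
  · exact Function.update_self ..
  · exact (Function.update_of_ne hlt.ne ..).trans (hextend x hlt).symm

variable {A : Set M} {κ : Cardinal} {γ O W : Type} [LinearOrder O] [LinearOrder W] [Infinite O]
  {c : O → γ → M}

theorem EMEq.exists_update [DecidableEq W] (hhom : HomogeneousOver L A κ) {U : Set W} {x : W}
    (hx : x ∉ U) (hU : #(U × γ) < κ) {s : W → γ → M} (hs : EMEq L A c fun w : U ↦ s w)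
    {s' : ↥(insert x U) → γ → M} (hs' : EMEq L A c s') :
    ∃ b, EMEq L A c fun w : ↥(insert x U) ↦ Function.update s x b w := by
  have heq : EqTp L A (Function.uncurry (s' ∘ Set.inclusion (Set.subset_insert x U)))
      (Function.uncurry fun w : U ↦ s w) :=
    (hs'.symm.trans hs).eqTp (fun _ _ h ↦ h) strictMono_id
  obtain ⟨f, hf, hfA, hfs⟩ := hhom _ _ _ hU heq
  refine ⟨f ∘ s' ⟨x, Set.mem_insert x U⟩, ?_⟩
  convert hs'.auto hf hfA with w
  obtain ⟨w, rfl | hw⟩ := w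
  · exact Function.update_self ..
  · rw [Function.update_of_ne (ne_of_mem_of_not_mem hw hx)]
    exact funext fun g ↦ (congrFun hfs (⟨w, hw⟩, g)).symm

theorem EMEq.exists_of_forall_mk_lt (hhom : HomogeneousOver L A κ) (hκ : ℵ₀ ≤ κ) (hγ : #γ < κ)
    [Infinite W] (hW : #W < κ)
    (h : ∀ U : Set W, #U < #W → ∃ s : U → γ → M, EMEq L A c s) :
    ∃ s : W → γ → M, EMEq L A c s := by
  classical
  obtain ⟨r⟩ : Nonempty (W ≃ (#W).ord.ToType) := Cardinal.eq.1 (by simp)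
  have hIic (x : (#W).ord.ToType) : #(r ⁻¹' Set.Iic x) < #W := by
    rw [mk_preimage_equiv]
    simpa using mk_Iic_lt x (by simp) (by simp)
  have : Nonempty (γ → M) := ⟨c (Classical.arbitrary O)⟩
  obtain ⟨s, hs⟩ : ∃ s : (#W).ord.ToType → γ → M, ∀ x,
      EMEq L A c fun w : r ⁻¹' Set.Iic x ↦ (s ∘ r) w := by
    refine exists_forall_of_forall_lt (fun x s t hst h ↦ ?_) fun x s hs ↦ ?_
    · convert h using 2 with w
      exact (hst w.2).symm
    · have hinsert : insert (r.symm x) (r ⁻¹' Set.Iio x) = r ⁻¹' Set.Iic x := by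
        ext; simp [le_iff_eq_or_lt, Equiv.eq_symm_apply]
      have hsmall : #(r ⁻¹' Set.Iio x) < κ :=
        (mk_le_mk_of_subset (Set.preimage_mono Set.Iio_subset_Iic_self)).trans_lt
          ((hIic x).trans hW)
      obtain ⟨s', hs'⟩ := h _ (hinsert ▸ hIic x)
      simp only [Function.update_comp_equiv]
      rw [← hinsert]
      exact EMEq.exists_update hhom (by simp) (by simpa using mul_lt_of_lt hκ hsmall hγ)
        (.restrict_preimage_of_forall_Iic hs) hs'
  have huniv := EMEq.restrict_preimage_of_forall_Iic (J := Set.univ) fun x _ ↦ hs x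
  have hmono : StrictMono fun w : W ↦ (⟨w, trivial⟩ : r ⁻¹' Set.univ) := fun _ _ h ↦ h
  exact ⟨s ∘ r, huniv.comp_right hmono⟩

theorem Indisc.exists_emEq (hc : Indisc L A c) (hhom : HomogeneousOver L A κ) (hκ : ℵ₀ ≤ κ)
    (hγ : #γ < κ) (W : Type) [LinearOrder W] (hW : #W < κ) : ∃ s : W → γ → M, EMEq L A c s := by
  induction hμ : #W using WellFoundedLT.induction generalizing W with
  | ind μ ih =>
    rcases finite_or_infinite W with _ | _
    · have := Fintype.ofFinite W
      obtain ⟨i⟩ := nonempty_orderEmbedding_of_finite_infinite W O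
      exact ⟨c ∘ i, (indisc_iff_emEq.1 hc).comp_right i.strictMono⟩
    · exact EMEq.exists_of_forall_mk_lt hhom hκ hγ hW fun U hU ↦
        ih _ (hμ ▸ hU) U (hU.trans hW) rfl

theorem Indisc.exists_extend (hc : Indisc L A c) (hhom : HomogeneousOver L A κ) (hκ : ℵ₀ ≤ κ)
    (hγ : #γ < κ) {e : O → W} (he : StrictMono e) (hW : #W < κ) :
    ∃ c' : W → γ → M, Indisc L A c' ∧ c' ∘ e = c := by
  have hO : #(O × γ) < κ := by
    simpa using mul_lt_of_lt hκ ((mk_le_of_injective he.injective).trans_lt hW) hγ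
  obtain ⟨s, hs⟩ := hc.exists_emEq hhom hκ hγ W hW
  obtain ⟨f, hf, hfA, hfs⟩ := hhom _ _ _ hO (hs.symm.eqTp he strictMono_id)
  exact ⟨fun w ↦ f ∘ s w, (hs.auto hf hfA).indisc_right,
    funext fun o ↦ funext fun g ↦ congrFun hfs (o, g)⟩

end Stretching

section Blocks

variable {A : Set M} {κ : Cardinal} {γ O P J K : Type} [LinearOrder O] [LinearOrder P]
  [LinearOrder J] [LinearOrder K] {c : O → γ → M}

theorem strictMono_sumLexElim {f : J → O} {g : K → O} (hf : StrictMono f) (hg : StrictMono g)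
    (hfg : ∀ j k, f j < g k) : StrictMono fun p : J ⊕ₗ K ↦ Sum.elim f g (ofLex p) := by
  intro p p' h
  induction p using Lex.rec with | h p => _
  induction p' using Lex.rec with | h p' => _
  rcases p with p | p <;> rcases p' with p' | p'
  · exact hf (Sum.Lex.inl_lt_inl_iff.1 h)
  · exact hfg p p'
  · exact (Sum.Lex.not_inr_lt_inl h).elim
  · exact hg (Sum.Lex.inr_lt_inr_iff.1 h)

theorem Indisc.blocks (hc : Indisc L A c) {d : K ×ₗ J → O} (hd : StrictMono d) {e : P → O}
    (he : StrictMono e) (hed : ∀ l p, e l < d p) :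
    Indisc L (A ∪ Set.range (Function.uncurry (c ∘ e)))
      fun k ↦ Function.uncurry (c ∘ fun j ↦ d (toLex (k, j))) := by
  intro n i i' hi hi'
  have hblocks {i : Fin n → K} (hi : StrictMono i) :
      StrictMono fun p : Fin n ×ₗ J ↦ d (toLex (i (ofLex p).1, (ofLex p).2)) := by
    refine hd.comp fun p p' h ↦ ?_
    rw [Prod.Lex.lt_iff] at h ⊢
    exact h.imp (@hi _ _) (And.imp_left (congrArg i))
  have hall {i : Fin n → K} (hi : StrictMono i) :=
    strictMono_sumLexElim he (hblocks hi) fun l p ↦ hed l _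
  rw [eqTp_union_range_iff]
  convert (indisc_iff_emEq.1 hc).eqTp (hall hi) (hall hi') |>.comp
    (Sum.elim (fun p : (Fin n × J × γ) ↦ (toLex (.inr (toLex (p.1, p.2.1))), p.2.2))
      (Prod.map (toLex ∘ .inl) id)) using 1 <;>
  · ext (p | p) <;> rfl

theorem strictMono_prependBlock {g : J → O} (hg : StrictMono g) :
    StrictMono fun p : ℕ ×ₗ J ↦ ((ofLex p).1.rec (toLex (.inl (g (ofLex p).2)))
      fun k _ ↦ toLex (.inr (toLex (k, (ofLex p).2))) : O ⊕ₗ ℕ ×ₗ J) := by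
  intro p p' h
  induction p using Lex.rec with | h p => _
  induction p' using Lex.rec with | h p' => _
  obtain ⟨_ | k, j⟩ := p <;> obtain ⟨_ | k', j'⟩ := p' <;>
    simp_all [Prod.Lex.lt_iff, hg.lt_iff_lt]

theorem Indisc.lsEq_of_strictMono [Infinite O] (hc : Indisc L A c) (hhom : HomogeneousOver L A κ)
    (hκ : ℵ₀ < κ) (hγ : #γ < κ) (hO : #O < κ) (hJ : #J < κ) {g g' : J → O} (hg : StrictMono g)
    (hg' : StrictMono g') {e : P → O} (he : StrictMono e) (heg : ∀ l j, e l < g j)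
    (heg' : ∀ l j, e l < g' j) :
    LsEq L (A ∪ Set.range (Function.uncurry (c ∘ e))) (Function.uncurry (c ∘ g))
      (Function.uncurry (c ∘ g')) := by
  have hsmall : #(O ⊕ₗ ℕ ×ₗ J) < κ := by
    rw [mk_congr ofLex, mk_sum, mk_congr ofLex, mk_prod]
    simpa using add_lt_of_lt hκ.le hO (mul_lt_of_lt hκ.le hκ hJ)
  obtain ⟨c', hc', rfl⟩ := hc.exists_extend hhom hκ.le hγ Sum.Lex.inl_strictMono hsmall
  have htail {g : J → O} (hg : StrictMono g) (heg : ∀ l j, e l < g j) :=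
    (hc'.blocks (strictMono_prependBlock hg) (Sum.Lex.inl_strictMono.comp he) fun l p ↦ by
      obtain ⟨_ | k, j⟩ := p
      exacts [Sum.Lex.inl_strictMono (heg l j), Sum.Lex.inl_lt_inr _ _]).lsEq_nat
  exact (htail hg heg).trans (htail hg' heg').symm

end Blocks

section SnocTop

variable {A : Set M} {κ : Cardinal} {γ O : Type} [LinearOrder O] {c : O → γ → M} {q : γ → M}

/-- The sequence `c` followed by one last term `q`. -/
def snocTop {O β : Type} (c : O → β) (q : β) : WithTop O → β
  | ⊤ => q
  | (i : O) => c i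

theorem EqTp.uncurry_snoc {n : ℕ} {u v : Fin n → γ → M} {x y : γ → M}
    (h : EqTp L A (Sum.elim x (Function.uncurry u)) (Sum.elim y (Function.uncurry v))) :
    EqTp L A (Function.uncurry (Fin.snoc u x : Fin (n + 1) → γ → M))
      (Function.uncurry (Fin.snoc v y : Fin (n + 1) → γ → M)) := by
  convert h.comp fun p : Fin (n + 1) × γ ↦
      Fin.lastCases (motive := fun _ ↦ γ ⊕ Fin n × γ) (.inl p.2) (fun k ↦ .inr (k, p.2)) p.1
    using 1 <;>
  · ext ⟨k, g⟩
    cases k using Fin.lastCases <;> simp [Function.uncurry]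

theorem emEq_snocTop (hc : Indisc L A c) (hq : ∀ (n : ℕ) (i : Fin (n + 1) → O) (j : Fin n → O),
      StrictMono i → StrictMono j → EqTp L A (Sum.elim q (Function.uncurry (c ∘ j)))
        (Sum.elim (c (i (Fin.last n))) (Function.uncurry (c ∘ i ∘ Fin.castSucc)))) :
    EMEq L A (snocTop c q) c := by
  have hcoe {n : ℕ} {k : Fin n → WithTop O} (hk : StrictMono k) (hne : ∀ x, k x ≠ ⊤) :
      ∃ j : Fin n → O, StrictMono j ∧ k = (↑) ∘ j := by
    lift k to Fin n → O using hne
    exact ⟨k, fun _ _ h ↦ WithTop.coe_lt_coe.1 (hk h), rfl⟩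
  intro n k i hk hi
  by_cases htop : ∀ x, k x ≠ ⊤
  · obtain ⟨j, hj, rfl⟩ := hcoe hk htop
    exact hc n j i hj hi
  · push Not at htop
    obtain ⟨x, hx⟩ := htop
    obtain _ | n := n
    · exact x.elim0
    have hlast : k (Fin.last n) = ⊤ := top_le_iff.1 (hx ▸ hk.monotone (Fin.le_last x))
    obtain ⟨j, hj, hkj⟩ := hcoe (hk.comp (Fin.strictMono_castSucc)) fun y ↦
      (hk (Fin.castSucc_lt_last y)).ne_top
    have hkq : snocTop c q ∘ k = (Fin.snoc (c ∘ j) q : Fin (n + 1) → γ → M) := by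
      ext y
      cases y using Fin.lastCases with
      | last => simp [hlast, snocTop]
      | cast y => simpa [snocTop] using congrFun (congrArg (snocTop c q) (congrFun hkj y)) _
    rw [hkq, ← Fin.snoc_init_self (c ∘ i)]
    exact (hq n i j hi hj).uncurry_snoc

theorem Indisc.lsEq_of_snocTop [Infinite O] (h : Indisc L A (snocTop c q))
    (hhom : HomogeneousOver L A κ) (hκ : ℵ₀ < κ) (hγ : #γ < κ) (hO : #O < κ) (i : O) :
    LsEq L (A ∪ ⋃ (j : O) (_ : j < i), Set.range (c j)) (c i) q := by
  have hWithTop : #(WithTop O) < κ := by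
    rw [WithTop, mk_option]
    exact add_lt_of_lt hκ.le hO (one_lt_aleph0.trans hκ)
  have : Infinite (WithTop O) := inferInstanceAs (Infinite (Option O))
  have := (h.lsEq_of_strictMono hhom hκ hγ hWithTop (mk_unit.trans_lt (one_lt_aleph0.trans hκ))
    (g := fun _ ↦ i) (g' := fun _ ↦ ⊤) (Subsingleton.strictMono _) (Subsingleton.strictMono _)
    (e := fun j : Set.Iio i ↦ (j : O)) (fun _ _ h ↦ WithTop.coe_lt_coe.2 h)
    (fun l _ ↦ WithTop.coe_lt_coe.2 l.2) fun l _ ↦ WithTop.coe_lt_top _).comp (Prod.mk ())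
  refine this.mono (Set.union_subset_union_right A ?_)
  simp only [Set.iUnion_subset_iff, Set.range_subset_iff]
  exact fun j hj x ↦ ⟨(⟨j, hj⟩, x), rfl⟩

end SnocTop

section Morley

variable {κ : Cardinal} {Mon BigMon : Type} [L.Structure BigMon] {emb : Mon → BigMon}
  {A : Set Mon} {γ ι : Type} [LinearOrder ι] {q : γ → BigMon} {a : ι → γ → Mon}

theorem IsMorleyIn.lsEq_of_strictMono (h : IsMorleyIn L κ emb A q a) (hA : #A < κ) {n : ℕ}
    {g : Fin n → ι} (hg : StrictMono g) (j : Fin n) :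
    LsEq L (emb '' A ∪ ⋃ (k : Fin n) (_ : k < j), Set.range (emb ∘ a (g k))) (emb ∘ a (g j)) q := by
  obtain ⟨α, haα, hα⟩ := h
  exact (hα n g hg A subset_rfl hA (a ∘ g)).1 (haα.comp (Prod.map g id)) j

theorem IsMorleyIn.indisc_comp (h : IsMorleyIn L κ emb A q a) (hA : #A < κ) :
    Indisc L (emb '' A) fun i ↦ emb ∘ a i := by
  intro n g g' hg hg'
  have hg'q := h.lsEq_of_strictMono hA hg'
  obtain ⟨α, haα, hα⟩ := h
  have hgα := haα.comp (Prod.map g id)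
  exact (hgα.trans ((hα n g hg A subset_rfl hA (a ∘ g')).2 hg'q).symm).eqTp

theorem IsMorleyIn.eqTp_elim (h : IsMorleyIn L κ emb A q a) (hA : #A < κ) {n : ℕ}
    {g : Fin (n + 1) → ι} (hg : StrictMono g) :
    EqTp L (emb '' A) (Sum.elim (emb ∘ a (g (Fin.last n)))
        (emb ∘ Function.uncurry (a ∘ g ∘ Fin.castSucc)))
      (Sum.elim q (emb ∘ Function.uncurry (a ∘ g ∘ Fin.castSucc))) := by
  rw [← eqTp_union_range_iff]
  refine ((h.lsEq_of_strictMono hA hg (Fin.last n)).mono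
    (Set.union_subset_union_right _ ?_)).eqTp
  rintro _ ⟨⟨k, x⟩, rfl⟩
  exact Set.mem_iUnion₂.2 ⟨k.castSucc, Fin.castSucc_lt_last k, x, rfl⟩

theorem IsMorleyIn.lsEq_of_finite [Finite ι] (h : IsMorleyIn L κ emb A q a) (hA : #A < κ) (i : ι) :
    LsEq L (emb '' A ∪ ⋃ (j : ι) (_ : j < i), Set.range (emb ∘ a j)) (emb ∘ a i) q := by
  have := Fintype.ofFinite ι
  let e : Fin (Fintype.card ι) ≃o ι := Fintype.orderIsoFinOfCardEq ι rfl
  have hi := h.lsEq_of_strictMono hA e.strictMono (e.symm i)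
  rw [e.apply_symm_apply] at hi
  refine hi.mono (Set.union_subset_union_right _ (Set.iUnion₂_subset fun j hj ↦ ?_))
  rw [← e.apply_symm_apply j]
  exact Set.subset_biUnion_of_mem (u := fun k ↦ Set.range (emb ∘ a (e k))) (e.symm.lt_iff_lt.2 hj)

theorem LsEq.of_eqTp_range {u : γ → Mon} {α : γ → BigMon} {B : Set Mon}
    (hhom : HomogeneousOver L (Set.range emb) κ) (hγ : #γ < κ)
    (h : LsEq L (emb '' B) (emb ∘ u) q) (hα : EqTp L (Set.range emb) α q) :
    LsEq L (emb '' B) (emb ∘ u) α := by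
  obtain ⟨f, hf, hfemb, rfl⟩ := hhom _ _ _ hγ hα.symm
  have hfu : f ∘ emb ∘ u = emb ∘ u := funext fun x ↦ hfemb _ ⟨u x, rfl⟩
  exact hfu ▸ h.auto hf fun z hz ↦ hfemb z (Set.image_subset_range _ _ hz)

variable [L.Structure Mon]

theorem IsMorleyIn.indisc (h : IsMorleyIn L κ emb A q a) (hA : #A < κ)
    (hemb : IsImmersionMap L emb) : Indisc L A a :=
  fun n i j hi hj ↦ hemb.eqTp_of_image (h.indisc_comp hA n i j hi hj)

theorem IsMorleyIn.indisc_snocTop [Infinite ι] (h : IsMorleyIn L κ emb A q a) (hA : #A < κ)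
    (hemb : IsImmersionMap L emb) (hhom : HomogeneousOver L A κ) (hκ : ℵ₀ < κ) (hγ : #γ < κ)
    (hι : #ι < κ) (hq : LsInvariantOver L κ emb A q) :
    Indisc L (emb '' A) (snocTop (fun i ↦ emb ∘ a i) q) := by
  refine (emEq_snocTop (h.indisc_comp hA) fun n i j hi hj ↦ ?_).indisc_left
  have hn : #(Fin n) < κ := (lt_aleph0_of_finite _).trans hκ
  have hij : LsEq L A (Function.uncurry (a ∘ j)) (Function.uncurry (a ∘ i ∘ Fin.castSucc)) :=
    ((h.indisc hA hemb).lsEq_of_strictMono hhom hκ hγ hι hn hj (hi.comp Fin.strictMono_castSucc)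
      (e := Empty.elim) (fun x ↦ x.elim) (fun x ↦ x.elim) fun x ↦ x.elim).mono
      Set.subset_union_left
  have hsmall : #(Fin n × γ) < κ := by simpa using mul_lt_of_lt hκ.le hn hγ
  exact (hq _ _ _ hsmall hij).eqTp.trans (h.eqTp_elim hA hi).symm

end Morley

theorem morley_sequence_properties_general
    {L : FirstOrder.Language.{0, 0}} (T : Set (HSentence L)) (κ κ' : Cardinal)
    (Mon BigMon : Type) [L.Structure Mon] [L.Structure BigMon]
    (emb : Mon → BigMon)
    (hMon : IsMonster T κ Mon) (hBigMon : IsMonster T κ' BigMon)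
    (hemb : IsImmersionMap L emb) (hsize : #Mon < κ')
    (A : Set Mon) (hA : #(↥A) < κ)
    {γ : Type} (hγ : #γ < κ)
    (q : γ → BigMon) (hq : LsInvariantOver L κ emb A q)
    {ι : Type} [LinearOrder ι] (hι : #ι < κ)
    (a : ι → γ → Mon) (hMor : IsMorleyIn L κ emb A q a) :
    (∀ i : ι, ∀ α : γ → BigMon, EqTp L (Set.range emb) α q →
      LsEq L (emb '' (A ∪ ⋃ (j : ι) (_ : j < i), Set.range (a j)))
        (fun x => emb (a i x)) α) ∧
    Indisc L A a := by
  have hhom : HomogeneousOver L A κ := hMon.homogeneousOver hA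
  have hBighom (B : Set Mon) : HomogeneousOver L (emb '' B) κ :=
    hMon.homogeneousOver_image hBigMon hsize hemb B
  refine ⟨fun i α hα ↦ .of_eqTp_range (Set.image_univ ▸ hBighom _) hγ ?_ hα, hMor.indisc hA hemb⟩
  rw [Set.image_union, Set.image_iUnion₂]
  simp only [← Set.range_comp]
  rcases finite_or_infinite ι with _ | _
  · exact hMor.lsEq_of_finite hA i
  · exact (hMor.indisc_snocTop hA hemb hhom hMon.aleph0_lt hγ hι hq).lsEq_of_snocTop (hBighom A)
      hMon.aleph0_lt hγ hι i

/-- **Basic properties of Morley sequences in a global Lascar-invariant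
type** (Dobrowolski–Kamsma, Proposition 3.31).  Let `T` be a thick positive
theory and `q` a global `A`-Lascar-invariant type.  For any Morley sequence
`(a_i)_{i<δ}` in `q` over `A`:
(i) for all `i < δ`, `a_i ≡^Ls_{A a_{<i}} α`, where `α ⊨ q`;
(ii) `(a_i)_{i<δ}` is `A`-indiscernible. -/
theorem morley_sequence_properties
    {L : FirstOrder.Language.{0, 0}} (T : Set (HSentence L)) (κ κ' : Cardinal)
    (Mon BigMon : Type) [L.Structure Mon] [L.Structure BigMon]
    (emb : Mon → BigMon)
    (hJEP : HasJEP T)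
    (hMon : IsMonster T κ Mon) (hBigMon : IsMonster T κ' BigMon)
    (hemb : IsImmersionMap L emb) (hsize : #Mon < κ')
    (hthick : IsThick L κ Mon) (hthick' : IsThick L κ' BigMon)
    (A : Set Mon) (hA : #(↥A) < κ)
    {γ : Type} (hγ : #γ < κ)
    (q : γ → BigMon) (hq : LsInvariantOver L κ emb A q)
    {ι : Type} [LinearOrder ι] (hι : #ι < κ)
    (a : ι → γ → Mon) (hMor : IsMorleyIn L κ emb A q a) :
    (∀ i : ι, ∀ α : γ → BigMon, EqTp L (Set.range emb) α q →
      LsEq L (emb '' (A ∪ ⋃ (j : ι) (_ : j < i), Set.range (a j)))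
        (fun x => emb (a i x)) α) ∧
    Indisc L A a := by
  exact morley_sequence_properties_general T κ κ' Mon BigMon emb hMon hBigMon hemb hsize A hA hγ q
    hq hι a hMor

end PosLog
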